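/- In the Nehari setting, let Ψ = Φ ∘ m on the unit sphere S, where m(w) = s_w w. Then w ∈ S is a critical point of Ψ (i.e. Ψ'(w)z = 0 for all z ∈ T_wS) if and only if m(w) is a nontrivial critical point of Φ (i.e. Φ'(m(w)) = 0 and m(w) ≠ 0). Moreover inf_N Φ = inf_S Ψ. -/

import Mathlib

open scoped ENNReal

noncomputable section

/-- `H¹(V)`: as a set, the ℓ²-summable real functions on the vertex set;
the `H¹` norm is equivalent to the ℓ² norm by the uniform degree bound. -/
abbrev H1 (Vtx : Type*) := lp (fun _ : Vtx => ℝ) 2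

variable {Vtx : Type*}

/-- `Γ(u,v)(x) = (1/2) Σ_{y∼x} (u(y)-u(x))(v(y)-v(x))`. -/
def gammaProd (adj : Vtx → Vtx → Prop) (u v : Vtx → ℝ) (x : Vtx) : ℝ :=
  (1/2) * ∑' y : {y : Vtx // adj x y}, (u y.1 - u x) * (v y.1 - v x)

/-- `|∇u|²(x) = (1/2) Σ_{y∼x} (u(y)-u(x))²`. -/
def gradSq (adj : Vtx → Vtx → Prop) (u : Vtx → ℝ) (x : Vtx) : ℝ :=
  gammaProd adj u u x

/-- `Δu(x) = Σ_{y∼x} (u(y)-u(x))`. -/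
def graphLap (adj : Vtx → Vtx → Prop) (u : Vtx → ℝ) (x : Vtx) : ℝ :=
  ∑' y : {y : Vtx // adj x y}, (u y.1 - u x)

/-- the norm `‖u‖` induced by the potential `V`:
`‖u‖² = Σ_x (|∇u|²(x) + V(x)u(x)²)`. -/
def nrmV (adj : Vtx → Vtx → Prop) (Vp : Vtx → ℝ) (u : Vtx → ℝ) : ℝ :=
  Real.sqrt (∑' x, (gradSq adj u x + Vp x * (u x)^2))

/-- the `V`-norm of an element of `H¹`. -/
def nrmH (adj : Vtx → Vtx → Prop) (Vp : Vtx → ℝ) (u : H1 Vtx) : ℝ :=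
  nrmV adj Vp (fun y => u y)

/-- `⟨u,v⟩ = Σ_x (Γ(u,v)(x) + V(x)u(x)v(x))`. -/
def iprodH (adj : Vtx → Vtx → Prop) (Vp : Vtx → ℝ) (u v : H1 Vtx) : ℝ :=
  ∑' x, (gammaProd adj (fun y => u y) (fun y => v y) x + Vp x * u x * v x)

/-- the variational functional `Φ(u) = ½‖u‖² − Σ_x F(x,u(x))`. -/
def PhiF (adj : Vtx → Vtx → Prop) (Vp : Vtx → ℝ) (F : Vtx → ℝ → ℝ) (u : H1 Vtx) : ℝ :=
  (1/2) * ∑' x, (gradSq adj (fun y => u y) x + Vp x * (u x)^2) - ∑' x, F x (u x)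

/-- the Nehari manifold `N = {u ∈ H¹\{0} : Φ'(u)u = 0}`. -/
def Nehari (adj : Vtx → Vtx → Prop) (Vp : Vtx → ℝ) (F : Vtx → ℝ → ℝ) : Set (H1 Vtx) :=
  {u | u ≠ 0 ∧ fderiv ℝ (PhiF adj Vp F) u u = 0}

/-- adjacency of the lattice graph `ℤ^N`. -/
def adjZ (N : ℕ) (x y : Fin N → ℤ) : Prop := (∑ i, (x i - y i).natAbs) = 1

end


theorem psi_abs {E : Type*} [NormedAddCommGroup E] [NormedSpace ℝ E]
    (P : E → ℝ) (P' : E → E →L[ℝ] ℝ) (hP : ∀ u, HasStrictFDerivAt P (P' u) u)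
    (sw : E → ℝ) (hpos : ∀ w, w ≠ 0 → 0 < sw w)
    (hup : ∀ w, w ≠ 0 → StrictMonoOn (fun t : ℝ => P (t • w)) (Set.Ioc 0 (sw w)))
    (hdn : ∀ w, w ≠ 0 → StrictAntiOn (fun t : ℝ => P (t • w)) (Set.Ici (sw w)))
    (w : E) (hw : w ≠ 0) :
    HasFDerivAt (fun v => P (sw v • v)) (sw w • P' (sw w • w)) w := by
  have hPc : Continuous P := continuous_iff_continuousAt.2 fun u => (hP u).hasFDerivAt.continuousAt
  have hne : ∀ᶠ v in nhds w, v ≠ 0 := isOpen_ne.mem_nhds hw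
  have hs := hpos w hw
  have hmax : ∀ v, v ≠ 0 → ∀ t : ℝ, 0 < t → P (t • v) ≤ P (sw v • v) := by
    intro v hv t ht
    rcases le_total t (sw v) with h | h
    · exact (hup v hv).monotoneOn ⟨ht, h⟩ ⟨hpos v hv, le_rfl⟩ h
    · exact (hdn v hv).antitoneOn (Set.mem_Ici.2 le_rfl) h h
  have hcs : Filter.Tendsto sw (nhds w) (nhds (sw w)) := by
    rw [tendsto_order]
    constructor
    · intro t0 ht0
      obtain ⟨t1, h1, h2⟩ := exists_between (max_lt ht0 hs)
      have h1' : 0 < t1 := lt_of_le_of_lt (le_max_right _ _) h1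
      have h1'' : t0 < t1 := lt_of_le_of_lt (le_max_left _ _) h1
      have hlt : P (t1 • w) < P (sw w • w) := hup w hw ⟨h1', h2.le⟩ ⟨hs, le_rfl⟩ h2
      have hev : ∀ᶠ v in nhds w, P (t1 • v) < P (sw w • v) :=
        (isOpen_lt (by fun_prop) (by fun_prop)).mem_nhds hlt
      filter_upwards [hev, hne] with v hv hv0
      by_contra! hc
      have hc' : sw v ≤ t1 := hc.trans h1''.le
      exact absurd (hdn v hv0 (Set.mem_Ici.2 hc') (Set.mem_Ici.2 (hc'.trans h2.le)) h2) (not_lt.2 hv.le)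
    · intro t2 ht2
      have hlt : P (t2 • w) < P (sw w • w) := hdn w hw (Set.mem_Ici.2 le_rfl) (Set.mem_Ici.2 ht2.le) ht2
      have hev : ∀ᶠ v in nhds w, P (t2 • v) < P (sw w • v) :=
        (isOpen_lt (by fun_prop) (by fun_prop)).mem_nhds hlt
      filter_upwards [hev, hne] with v hv hv0
      by_contra! hc
      exact absurd (hup v hv0 ⟨hs, ht2.le.trans hc⟩ ⟨hs.trans ht2, hc⟩ ht2) (not_lt.2 hv.le)
  set L := P' (sw w • w) with hL
  have hO := (hP (sw w • w)).isLittleO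
  have hid : Filter.Tendsto (fun v : E => v) (nhds w) (nhds w) := Filter.tendsto_id
  have hA : (fun v => P (sw v • v) - P (sw v • w) - L (sw v • v - sw v • w)) =o[nhds w]
      (fun v => v - w) := by
    have ht : Filter.Tendsto (fun v => (sw v • v, sw v • w)) (nhds w) (nhds (sw w • w, sw w • w)) :=
      (hcs.smul hid).prodMk_nhds (hcs.smul tendsto_const_nhds)
    refine (hO.comp_tendsto ht).trans_isBigO ?_
    have : (fun v => sw v • (v - w)) =O[nhds w] (fun v => (1:ℝ) • (v - w)) :=
      (hcs.isBigO_one ℝ).smul (Asymptotics.isBigO_refl _ _)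
    simpa [Function.comp_def, smul_sub] using this
  have hB : (fun v => P (sw w • v) - P (sw w • w) - L (sw w • v - sw w • w)) =o[nhds w]
      (fun v => v - w) := by
    have ht : Filter.Tendsto (fun v => (sw w • v, sw w • w)) (nhds w) (nhds (sw w • w, sw w • w)) :=
      (tendsto_const_nhds.smul hid).prodMk_nhds tendsto_const_nhds
    refine (hO.comp_tendsto ht).trans_isBigO ?_
    have : (fun v => sw w • (v - w)) =O[nhds w] (fun v => v - w) :=
      (Asymptotics.isBigO_refl _ _).const_smul_left _
    simpa [Function.comp_def, smul_sub] using this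
  have hC : (fun v => (sw v - sw w) • L (v - w)) =o[nhds w] (fun v => v - w) := by
    have h0 : (fun v => sw v - sw w) =o[nhds w] (fun _ => (1:ℝ)) := by
      rw [Asymptotics.isLittleO_one_iff]
      simpa using hcs.sub_const (sw w)
    have := h0.smul_isBigO (L.isBigO_sub (nhds w) w)
    have h3 := this.norm_right
    simpa using h3
  have hAC := (hA.add hC).norm_left.add hB.norm_left
  rw [hasFDerivAt_iff_isLittleO]
  refine Asymptotics.IsBigO.trans_isLittleO ?_ hAC
  refine Asymptotics.IsBigO.of_bound 1 ?_
  filter_upwards [hne] with v hv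
  have e1 := hmax v hv (sw w) hs
  have e2 := hmax w hw (sw v) (hpos v hv)
  simp only [smul_apply, map_sub, map_smul, smul_eq_mul, Real.norm_eq_abs, one_mul]
  rw [abs_of_nonneg (a := _ + _) (by positivity)]
  rw [abs_le]
  constructor
  · have := neg_abs_le (P (sw w • v) - P (sw w • w) - (sw w * L v - sw w * L w))
    have := abs_nonneg (P (sw v • v) - P (sw v • w) - (sw v * L v - sw v * L w) + (sw v - sw w) * (L v - L w))
    linarith
  · have := abs_nonneg (P (sw w • v) - P (sw w • w) - (sw w * L v - sw w * L w))
    have := le_abs_self (P (sw v • v) - P (sw v • w) - (sw v * L v - sw v * L w) + (sw v - sw w) * (L v - L w))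
    linarith

theorem h1_hasSum_sq {Vtx : Type*} (u : H1 Vtx) : HasSum (fun x => (u x)^2) (‖u‖^2) := by
  have := lp.hasSum_inner (𝕜 := ℝ) u u
  simpa [real_inner_self_eq_norm_sq] using this

theorem h1_hasSum_inner {Vtx : Type*} (u v : H1 Vtx) :
    HasSum (fun x => u x * v x) (inner ℝ u v) := by
  have e : (fun x => u x * v x) = fun x => inner ℝ (u x) (v x) := by
    funext x
    simp [mul_comm]
  rw [e]
  exact lp.hasSum_inner u v

/-- Nemytskii local bound. -/
theorem nem_bound {Vtx : Type*} (f : Vtx → ℝ → ℝ) (hcont : ∀ x, Continuous (f x))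
    (h0 : ∀ x, f x 0 = 0)
    (hsmall : ∀ ε > 0, ∃ δ > 0, ∀ x t, t ≠ 0 → |t| < δ → |f x t| ≤ ε * |t|)
    (u : H1 Vtx) (ε : ℝ) (hε : 0 < ε) :
    ∃ r > 0, ∀ x t, |t - u x| < r → |f x t - f x (u x)| ≤ ε * (|t| + |u x|) := by
  obtain ⟨δ, hδ, hd⟩ := hsmall ε hε
  have hd' : ∀ x t, |t| < δ → |f x t| ≤ ε * |t| := by
    intro x t ht
    by_cases h : t = 0
    · simp [h, h0]
    · exact hd x t h ht
  have hfinA : {x | ¬ |u x| < δ / 2}.Finite := by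
    have h1 := (h1_hasSum_sq u).summable.tendsto_cofinite_zero
    have h2 : ∀ᶠ x in Filter.cofinite, (u x)^2 < (δ/2)^2 := h1.eventually_lt_const (by positivity)
    have h3 : ∀ᶠ x in Filter.cofinite, |u x| < δ/2 := by
      filter_upwards [h2] with x hx
      exact abs_lt_of_sq_lt_sq hx (by positivity)
    exact h3
  have hx : ∀ x ∈ {x | ¬ |u x| < δ / 2}, ∀ᶠ r in nhdsWithin (0:ℝ) (Set.Ioi 0), ∀ t, |t - u x| < r →
      |f x t - f x (u x)| ≤ ε * (|t| + |u x|) := by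
    intro x hx
    have hx : δ / 2 ≤ |u x| := not_lt.1 hx
    have hp : 0 < ε * |u x| := mul_pos hε (by linarith)
    obtain ⟨r, hr, h⟩ := Metric.continuous_iff.1 (hcont x) (u x) _ hp
    filter_upwards [Ioo_mem_nhdsGT hr] with r' hr' t ht
    have := h t (lt_trans ht hr'.2)
    rw [Real.dist_eq] at this
    nlinarith [mul_nonneg hε.le (abs_nonneg t)]
  have hall := (Filter.eventually_all_finite hfinA).2 hx
  obtain ⟨r, hr1, hr2⟩ := (hall.and (Ioo_mem_nhdsGT (half_pos hδ))).exists
  refine ⟨r, hr2.1, fun x t ht => ?_⟩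
  by_cases hx : |u x| < δ / 2
  · have e1 := hd' x (u x) (by linarith)
    have e2 := hd' x t (by
      have := abs_add_le (t - u x) (u x)
      rw [sub_add_cancel] at this
      have := hr2.2
      linarith)
    have := abs_sub (f x t) (f x (u x))
    linarith
  · exact hr1 x hx t ht

theorem nem_mem {Vtx : Type*} (f : Vtx → ℝ → ℝ) 
    (h0 : ∀ x, f x 0 = 0)
    (hsmall : ∀ ε > 0, ∃ δ > 0, ∀ x t, t ≠ 0 → |t| < δ → |f x t| ≤ ε * |t|)
    (u : H1 Vtx) : Memℓp (fun x => f x (u x)) 2 := by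
  obtain ⟨δ, hδ, hd⟩ := hsmall 1 one_pos
  refine memℓp_gen ?_
  have h1 := (h1_hasSum_sq u).summable
  have h2 : ∀ᶠ x in Filter.cofinite, (u x)^2 < δ^2 :=
    h1.tendsto_cofinite_zero.eventually_lt_const (by positivity)
  refine h1.of_norm_bounded_eventually ?_
  filter_upwards [h2] with x hx
  have hx := abs_lt_of_sq_lt_sq hx hδ.le
  have : |f x (u x)| ≤ |u x| := by
    by_cases h : u x = 0
    · simp [h, h0]
    · simpa using hd x _ h hx
  simp only [ENNReal.toReal_ofNat, Real.rpow_ofNat, Real.norm_eq_abs, abs_pow, abs_abs, sq_abs]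
  exact sq_le_sq.2 this

theorem F_mvt (f : ℝ → ℝ) (hc : Continuous f) (F : ℝ → ℝ) (hF : ∀ t, F t = ∫ s in (0:ℝ)..t, f s)
    (a b : ℝ) : ∃ c ∈ Set.uIcc a b, F b - F a = f c * (b - a) := by
  have hd : ∀ t, HasDerivAt F (f t) t := by
    intro t
    rw [funext hF]
    exact intervalIntegral.integral_hasDerivAt_right (hc.intervalIntegrable _ _)
      (hc.stronglyMeasurableAtFilter _ _) hc.continuousAt
  have key : ∀ a b : ℝ, a < b → ∃ c ∈ Set.uIcc a b, F b - F a = f c * (b - a) := by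
    intro a b hab
    obtain ⟨c, hc1, hc2⟩ := exists_hasDerivAt_eq_slope F f hab
      (fun t _ => (hd t).continuousAt.continuousWithinAt) (fun t _ => hd t)
    refine ⟨c, Set.Icc_subset_uIcc ⟨hc1.1.le, hc1.2.le⟩, ?_⟩
    rw [hc2]
    field_simp [(sub_pos.2 hab).ne']
  rcases lt_trichotomy a b with h | h | h
  · exact key a b h
  · subst h; exact ⟨a, by simp, by simp⟩
  · obtain ⟨c, h1, h2⟩ := key b a h
    exact ⟨c, by rwa [Set.uIcc_comm], by linarith⟩

theorem F_summable {Vtx : Type*} (f : Vtx → ℝ → ℝ) (hcont : ∀ x, Continuous (f x))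
    (h0 : ∀ x, f x 0 = 0)
    (hsmall : ∀ ε > 0, ∃ δ > 0, ∀ x t, t ≠ 0 → |t| < δ → |f x t| ≤ ε * |t|)
    (F : Vtx → ℝ → ℝ) (hF : ∀ x t, F x t = ∫ s in (0:ℝ)..t, f x s)
    (u : H1 Vtx) : Summable (fun x => F x (u x)) := by
  obtain ⟨δ, hδ, hd⟩ := hsmall 1 one_pos
  have h1 := (h1_hasSum_sq u).summable
  have h2 : ∀ᶠ x in Filter.cofinite, (u x)^2 < δ^2 :=
    h1.tendsto_cofinite_zero.eventually_lt_const (by positivity)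
  refine h1.of_norm_bounded_eventually ?_
  filter_upwards [h2] with x hx
  have hx := abs_lt_of_sq_lt_sq hx hδ.le
  obtain ⟨c, hc, he⟩ := F_mvt (f x) (hcont x) (F x) (hF x) 0 (u x)
  have hF0 : F x 0 = 0 := by simp [hF]
  have hcu : |c| ≤ |u x| := by simpa using Set.abs_sub_left_of_mem_uIcc hc
  have : |f x c| ≤ |u x| := by
    by_cases h : c = 0
    · simp [h, h0]
    · have := hd x c h (by linarith)
      linarith
  rw [hF0, sub_zero, sub_zero] at he
  rw [he, Real.norm_eq_abs, abs_mul, ← sq_abs (u x), sq]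
  gcongr

/-- the nonlinear part is strictly differentiable -/
theorem J_strict {Vtx : Type*} (f : Vtx → ℝ → ℝ) (hcont : ∀ x, Continuous (f x))
    (h0 : ∀ x, f x 0 = 0)
    (hsmall : ∀ ε > 0, ∃ δ > 0, ∀ x t, t ≠ 0 → |t| < δ → |f x t| ≤ ε * |t|)
    (F : Vtx → ℝ → ℝ) (hF : ∀ x t, F x t = ∫ s in (0:ℝ)..t, f x s)
    (u : H1 Vtx) : HasStrictFDerivAt (fun u : H1 Vtx => ∑' x, F x (u x))
      (innerSL ℝ (⟨fun x => f x (u x), nem_mem f h0 hsmall u⟩ : H1 Vtx)) u := by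
  set g : H1 Vtx := ⟨fun x => f x (u x), nem_mem f h0 hsmall u⟩ with hg
  have hgx : ∀ x, g x = f x (u x) := fun x => rfl
  refine .of_isLittleO ?_
  rw [Asymptotics.isLittleO_iff]
  intro c hc
  set K : ℝ := 3 * ‖u‖ + 2 with hK
  have hKp : 0 < K := by positivity
  obtain ⟨r, hr, hb⟩ := nem_bound f hcont h0 hsmall u (c / K) (by positivity)
  have hr' : 0 < min r 1 := lt_min hr one_pos
  have hnb : Metric.ball u (min r 1) ×ˢ Metric.ball u (min r 1) ∈ nhds (u, u) :=
    prod_mem_nhds (Metric.ball_mem_nhds _ hr') (Metric.ball_mem_nhds _ hr')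
  filter_upwards [hnb] with p hp
  obtain ⟨a, b⟩ := p
  obtain ⟨ha, hb'⟩ := hp
  simp only [Metric.mem_ball, dist_eq_norm] at ha hb'
  have pt : ∀ v : H1 Vtx, ∀ x, |v x| ≤ ‖v‖ := fun v x => lp.norm_apply_le_norm two_ne_zero v x
  have hax : ∀ x, |a x - u x| < r := fun x => by
    have := pt (a - u) x
    simp only [lp.coeFn_sub, Pi.sub_apply] at this
    linarith [min_le_left r 1]
  have hbx : ∀ x, |b x - u x| < r := fun x => by
    have := pt (b - u) x
    simp only [lp.coeFn_sub, Pi.sub_apply] at this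
    linarith [min_le_left r 1]
  have term : ∀ x, |F x (a x) - F x (b x) - g x * (a x - b x)| ≤
      c / K * ((|a x| + |b x| + |u x|) * |a x - b x|) := by
    intro x
    obtain ⟨ξ, hξ, he⟩ := F_mvt (f x) (hcont x) (F x) (hF x) (b x) (a x)
    rw [he, hgx, ← sub_mul, abs_mul, ← mul_assoc]
    gcongr
    have h1 : |ξ| ≤ |a x| + |b x| := by
      rw [Set.mem_uIcc] at hξ
      rw [abs_le]
      have := neg_abs_le (a x); have := neg_abs_le (b x); have := le_abs_self (a x); have := le_abs_self (b x)
      have := abs_nonneg (a x); have := abs_nonneg (b x)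
      rcases hξ with h | h <;> constructor <;> linarith [h.1, h.2]
    have h2 : |ξ - u x| < r := by
      have h3 := hax x; have h4 := hbx x
      rw [abs_lt] at h3 h4 ⊢
      rw [Set.mem_uIcc] at hξ
      rcases hξ with h | h <;> constructor <;> linarith [h.1, h.2]
    refine (hb x ξ h2).trans ?_
    gcongr
  have absmem : ∀ v : H1 Vtx, ∃ v' : H1 Vtx, (∀ x, v' x = |v x|) ∧ ‖v'‖ = ‖v‖ := by
    intro v
    have hm : Memℓp (fun x => |v x|) 2 := by
      refine memℓp_gen ?_
      simpa using (h1_hasSum_sq v).summable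
    refine ⟨⟨_, hm⟩, fun x => rfl, ?_⟩
    have e1 := h1_hasSum_sq (⟨_, hm⟩ : H1 Vtx)
    have e2 := h1_hasSum_sq v
    have e3 : (fun x => ((⟨_, hm⟩ : H1 Vtx) x)^2) = fun x => (v x)^2 := by
      funext x; exact sq_abs (v x)
    rw [e3] at e1
    have := e1.unique e2
    exact (sq_eq_sq₀ (norm_nonneg _) (norm_nonneg _)).1 this
  obtain ⟨a', ha1, ha2⟩ := absmem a
  obtain ⟨b', hb1, hb2⟩ := absmem b
  obtain ⟨u', hu1, hu2⟩ := absmem u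
  obtain ⟨d', hd1, hd2⟩ := absmem (a - b)
  have hsumR := h1_hasSum_inner d' (a' + b' + u')
  have hsumR' : HasSum (fun x => (|a x| + |b x| + |u x|) * |a x - b x|) (inner ℝ d' (a' + b' + u')) := by
    have e : (fun x => (|a x| + |b x| + |u x|) * |a x - b x|) =
        fun x => d' x * (a' + b' + u') x := by
      funext x
      simp [ha1, hb1, hu1, hd1, mul_comm]
    rw [e]
    exact hsumR
  have hCS : inner ℝ d' (a' + b' + u') ≤ ‖a - b‖ * K := by
    refine (real_inner_le_norm _ _).trans ?_
    rw [hd2]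
    gcongr
    refine (norm_add₃_le).trans ?_
    rw [ha2, hb2, hu2]
    have h1 : ‖a‖ ≤ ‖a - u‖ + ‖u‖ := by simpa using norm_add_le (a - u) u
    have h2 : ‖b‖ ≤ ‖b - u‖ + ‖u‖ := by simpa using norm_add_le (b - u) u
    linarith [min_le_right r 1]
  have hL : HasSum (fun x => g x * (a x - b x)) (inner ℝ g (a - b)) := by
    exact h1_hasSum_inner g (a - b)
  have hFa := (F_summable f hcont h0 hsmall F hF a).hasSum
  have hFb := (F_summable f hcont h0 hsmall F hF b).hasSum
  have hT := (hFa.sub hFb).sub hL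
  have hfinal := tsum_of_norm_bounded (f := fun x => F x (a x) - F x (b x) - g x * (a x - b x)) (hsumR'.mul_left (c / K)) term
  rw [hT.tsum_eq] at hfinal
  simp only [innerSL_apply_apply]
  refine hfinal.trans ?_
  calc c / K * inner ℝ d' (a' + b' + u') ≤ c / K * (‖a - b‖ * K) := by gcongr
    _ = c * ‖a - b‖ := by field_simp

abbrev Eg {Vtx : Type*} (adj : Vtx → Vtx → Prop) := Σ x : Vtx, {y : Vtx // adj x y}

theorem eg_src {Vtx : Type*} (adj : Vtx → Vtx → Prop) (D : ℕ)
    (hfin : ∀ x, {y | adj x y}.Finite) (hdeg : ∀ x, {y | adj x y}.ncard ≤ D) (u : H1 Vtx) :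
    Summable (fun p : Eg adj => (u p.1)^2) ∧ ∑' p : Eg adj, (u p.1)^2 ≤ D * ‖u‖^2 := by
  haveI : ∀ x, Finite {y : Vtx // adj x y} := fun x => hfin x
  have hin : ∀ x, ∑' y : {y : Vtx // adj x y}, (u x)^2 ≤ D * (u x)^2 := by
    intro x
    rw [tsum_const, nsmul_eq_mul]
    have h1 : Nat.card {y : Vtx // adj x y} ≤ D := hdeg x
    gcongr
  have hs := (h1_hasSum_sq u).mul_left (D : ℝ)
  have hs1 : Summable (fun x => ∑' y : {y : Vtx // adj x y}, (u x)^2) :=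
    hs.summable.of_nonneg_of_le (fun x => tsum_nonneg fun _ => sq_nonneg _) hin
  have hs2 : Summable (fun p : Eg adj => (u p.1)^2) := by
    rw [summable_sigma_of_nonneg (fun _ => sq_nonneg _)]
    exact ⟨fun x => Summable.of_finite, hs1⟩
  refine ⟨hs2, ?_⟩
  rw [hs2.tsum_sigma]
  exact (hs1.tsum_le_tsum hin hs.summable).trans hs.tsum_eq.le

def egSwap {Vtx : Type*} (adj : Vtx → Vtx → Prop) (hsym : ∀ x y, adj x y → adj y x) :
    Eg adj ≃ Eg adj where
  toFun p := ⟨p.2.1, p.1, hsym _ _ p.2.2⟩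
  invFun p := ⟨p.2.1, p.1, hsym _ _ p.2.2⟩
  left_inv _ := rfl
  right_inv _ := rfl

theorem eg_tgt {Vtx : Type*} (adj : Vtx → Vtx → Prop) (D : ℕ)
    (hsym : ∀ x y, adj x y → adj y x)
    (hfin : ∀ x, {y | adj x y}.Finite) (hdeg : ∀ x, {y | adj x y}.ncard ≤ D) (u : H1 Vtx) :
    Summable (fun p : Eg adj => (u p.2.1)^2) ∧ ∑' p : Eg adj, (u p.2.1)^2 ≤ D * ‖u‖^2 := by
  obtain ⟨h1, h2⟩ := eg_src adj D hfin hdeg u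
  constructor
  · exact (egSwap adj hsym).summable_iff.2 h1
  · rw [← (egSwap adj hsym).tsum_eq] at h2
    exact h2

theorem eg_bound {Vtx : Type*} (adj : Vtx → Vtx → Prop) (D : ℕ)
    (hsym : ∀ x y, adj x y → adj y x)
    (hfin : ∀ x, {y | adj x y}.Finite) (hdeg : ∀ x, {y | adj x y}.ncard ≤ D) (u v : H1 Vtx) :
    Summable (fun p : Eg adj => (u p.2.1 - u p.1) * (v p.2.1 - v p.1)) ∧
    |∑' p : Eg adj, (u p.2.1 - u p.1) * (v p.2.1 - v p.1)| ≤ 2 * D * (‖u‖^2 + ‖v‖^2) := by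
  obtain ⟨a1, a2⟩ := eg_src adj D hfin hdeg u
  obtain ⟨b1, b2⟩ := eg_tgt adj D hsym hfin hdeg u
  obtain ⟨c1, c2⟩ := eg_src adj D hfin hdeg v
  obtain ⟨d1, d2⟩ := eg_tgt adj D hsym hfin hdeg v
  have hb : ∀ p : Eg adj, ‖(u p.2.1 - u p.1) * (v p.2.1 - v p.1)‖ ≤
      (u p.1)^2 + (u p.2.1)^2 + ((v p.1)^2 + (v p.2.1)^2) := by
    intro p
    rw [Real.norm_eq_abs, abs_le]
    generalize u p.1 = a
    generalize u p.2.1 = b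
    generalize v p.1 = c
    generalize v p.2.1 = d
    constructor
    · nlinarith [sq_nonneg (b - a + (d - c)), sq_nonneg (a + b), sq_nonneg (c + d)]
    · nlinarith [sq_nonneg (b - a - (d - c)), sq_nonneg (a + b), sq_nonneg (c + d)]
  have hs := (a1.hasSum.add b1.hasSum).add (c1.hasSum.add d1.hasSum)
  refine ⟨hs.summable.of_norm_bounded hb, ?_⟩
  have := tsum_of_norm_bounded hs hb
  rw [Real.norm_eq_abs] at this
  linarith

theorem v_bound {Vtx : Type*} (Vp : Vtx → ℝ) (C1 C2 : ℝ) (hC1 : 0 < C1)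
    (hVbd : ∀ x, C1 ≤ Vp x ∧ Vp x ≤ C2) (u v : H1 Vtx) :
    Summable (fun x => Vp x * u x * v x) ∧
    |∑' x, Vp x * u x * v x| ≤ C2 * (‖u‖^2 + ‖v‖^2) := by
  have hs := ((h1_hasSum_sq u).add (h1_hasSum_sq v)).mul_left C2
  have hb : ∀ x, ‖Vp x * u x * v x‖ ≤ C2 * ((u x)^2 + (v x)^2) := by
    intro x
    obtain ⟨h1, h2⟩ := hVbd x
    rw [mul_assoc, norm_mul, Real.norm_eq_abs, Real.norm_eq_abs, abs_of_pos (hC1.trans_le h1)]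
    have : |u x * v x| ≤ (u x)^2 + (v x)^2 := by
      rw [abs_le]
      constructor <;> nlinarith [sq_nonneg (u x + v x), sq_nonneg (u x - v x)]
    have h3 := hC1.trans_le h1
    have h4 := h3.trans_le h2
    gcongr
  exact ⟨hs.summable.of_norm_bounded hb, tsum_of_norm_bounded hs hb⟩

theorem iprod_eq {Vtx : Type*} (adj : Vtx → Vtx → Prop) (D : ℕ)
    (hsym : ∀ x y, adj x y → adj y x)
    (hfin : ∀ x, {y | adj x y}.Finite) (hdeg : ∀ x, {y | adj x y}.ncard ≤ D)
    (Vp : Vtx → ℝ) (C1 C2 : ℝ) (hC1 : 0 < C1)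
    (hVbd : ∀ x, C1 ≤ Vp x ∧ Vp x ≤ C2) (u v : H1 Vtx) :
    iprodH adj Vp u v = (1/2) * ∑' p : Eg adj, (u p.2.1 - u p.1) * (v p.2.1 - v p.1)
      + ∑' x, Vp x * u x * v x := by
  obtain ⟨h1, -⟩ := eg_bound adj D hsym hfin hdeg u v
  obtain ⟨h2, -⟩ := v_bound Vp C1 C2 hC1 hVbd u v
  unfold iprodH gammaProd
  rw [Summable.tsum_add (h1.sigma.mul_left _) h2, tsum_mul_left, h1.tsum_sigma]

theorem iprod_bilin {Vtx : Type*} (adj : Vtx → Vtx → Prop) (D : ℕ)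
    (hsym : ∀ x y, adj x y → adj y x)
    (hfin : ∀ x, {y | adj x y}.Finite) (hdeg : ∀ x, {y | adj x y}.ncard ≤ D)
    (Vp : Vtx → ℝ) (C1 C2 : ℝ) (hC1 : 0 < C1)
    (hVbd : ∀ x, C1 ≤ Vp x ∧ Vp x ≤ C2) :
    ∃ B : H1 Vtx →L[ℝ] H1 Vtx →L[ℝ] ℝ, (∀ u v, B u v = iprodH adj Vp u v) ∧
      (∀ u v, B u v = B v u) ∧ ∀ u, C1 * ‖u‖^2 ≤ B u u := by
  have heq := iprod_eq adj D hsym hfin hdeg Vp C1 C2 hC1 hVbd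
  have hs1 := fun u v => (eg_bound adj D hsym hfin hdeg u v).1
  have hs2 := fun u v => (v_bound Vp C1 C2 hC1 hVbd u v).1
  have hsymm : ∀ u v, iprodH adj Vp u v = iprodH adj Vp v u := by
    intro u v
    rw [heq, heq]
    congr 2
    · exact tsum_congr fun p => mul_comm _ _
    · funext x; ring
  have hadd : ∀ u v w, iprodH adj Vp u (v + w) = iprodH adj Vp u v + iprodH adj Vp u w := by
    intro u v w
    have e1 : ∑' p : Eg adj, (u p.2.1 - u p.1) * ((v + w) p.2.1 - (v + w) p.1) =
        ∑' p : Eg adj, (u p.2.1 - u p.1) * (v p.2.1 - v p.1) +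
        ∑' p : Eg adj, (u p.2.1 - u p.1) * (w p.2.1 - w p.1) := by
      rw [← Summable.tsum_add (hs1 u v) (hs1 u w)]
      refine tsum_congr fun p => ?_
      simp only [lp.coeFn_add, Pi.add_apply]
      ring
    have e2 : ∑' x, Vp x * u x * (v + w) x = ∑' x, Vp x * u x * v x + ∑' x, Vp x * u x * w x := by
      rw [← Summable.tsum_add (hs2 u v) (hs2 u w)]
      refine tsum_congr fun p => ?_
      simp only [lp.coeFn_add, Pi.add_apply]
      ring
    rw [heq, heq, heq, e1, e2]
    ring
  have hsmul : ∀ (c : ℝ) u v, iprodH adj Vp u (c • v) = c * iprodH adj Vp u v := by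
    intro c u v
    have e1 : ∑' p : Eg adj, (u p.2.1 - u p.1) * ((c • v) p.2.1 - (c • v) p.1) =
        c * ∑' p : Eg adj, (u p.2.1 - u p.1) * (v p.2.1 - v p.1) := by
      rw [← tsum_mul_left]
      refine tsum_congr fun p => ?_
      simp only [lp.coeFn_smul, Pi.smul_apply, smul_eq_mul]
      ring
    have e2 : ∑' x, Vp x * u x * (c • v) x = c * ∑' x, Vp x * u x * v x := by
      rw [← tsum_mul_left]
      refine tsum_congr fun p => ?_
      simp only [lp.coeFn_smul, Pi.smul_apply, smul_eq_mul]
      ring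
    rw [heq, heq, e1, e2]
    ring
  set B0 : H1 Vtx →ₗ[ℝ] H1 Vtx →ₗ[ℝ] ℝ := LinearMap.mk₂ ℝ (iprodH adj Vp)
    (fun u v w => by rw [hsymm, hadd, hsymm w u, hsymm w v])
    (fun c u v => by rw [hsymm, hsmul, hsymm v u, smul_eq_mul])
    hadd (fun c u v => by rw [hsmul, smul_eq_mul]) with hB0
  have hB0a : ∀ u v, B0 u v = iprodH adj Vp u v := fun u v => rfl
  have hbd0 : ∀ u v, |B0 u v| ≤ (D + C2) * (‖u‖^2 + ‖v‖^2) := by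
    intro u v
    rw [hB0a, heq]
    have h1 := (eg_bound adj D hsym hfin hdeg u v).2
    have h2 := (v_bound Vp C1 C2 hC1 hVbd u v).2
    refine (abs_add_le _ _).trans ?_
    rw [abs_mul, abs_of_pos (by norm_num : (0:ℝ) < 1/2)]
    linarith
  have hbd : ∀ u v, ‖B0 u v‖ ≤ (2 * (D + C2)) * ‖u‖ * ‖v‖ := by
    intro u v
    by_cases hu : u = 0
    · simp [hu]
    by_cases hv : v = 0
    · simp [hv]
    have hu' : 0 < ‖u‖ := norm_pos_iff.2 hu
    have hv' : 0 < ‖v‖ := norm_pos_iff.2 hv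
    have := hbd0 (‖u‖⁻¹ • u) (‖v‖⁻¹ • v)
    have n1 : ‖‖u‖⁻¹ • u‖ = 1 := norm_smul_inv_norm (𝕜 := ℝ) hu
    have n2 : ‖‖v‖⁻¹ • v‖ = 1 := norm_smul_inv_norm (𝕜 := ℝ) hv
    rw [n1, n2] at this
    simp only [map_smul, LinearMap.smul_apply, smul_eq_mul, abs_mul, abs_inv, abs_norm] at this
    rw [Real.norm_eq_abs]
    have e : |B0 u v| = (‖v‖⁻¹ * (‖u‖⁻¹ * |B0 u v|)) * ‖u‖ * ‖v‖ := by field_simp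
    rw [e]
    refine mul_le_mul_of_nonneg_right (mul_le_mul_of_nonneg_right ?_ hu'.le) hv'.le
    linarith
  refine ⟨B0.mkContinuous₂ _ hbd, fun u v => rfl, fun u v => hsymm u v, fun u => ?_⟩
  change C1 * ‖u‖^2 ≤ iprodH adj Vp u u
  rw [heq]
  have h1 : 0 ≤ ∑' p : Eg adj, (u p.2.1 - u p.1) * (u p.2.1 - u p.1) :=
    tsum_nonneg fun p => mul_self_nonneg _
  have hs := (h1_hasSum_sq u).mul_left C1
  have h2 := hs.summable.tsum_le_tsum (fun x => ?_) (hs2 u u)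
  · rw [hs.tsum_eq] at h2
    linarith
  · rw [mul_assoc, sq]
    exact mul_le_mul_of_nonneg_right (hVbd x).1 (mul_self_nonneg _)

theorem term_lt (f : ℝ → ℝ)
    (hmono : StrictMonoOn (fun t => f t / |t|) (Set.Iio 0) ∧
             StrictMonoOn (fun t => f t / |t|) (Set.Ioi 0))
    (w t s : ℝ) (ht : 0 < t) (hts : t < s) (hw : w ≠ 0) :
    s * (f (t * w) * w) < t * (f (s * w) * w) := by
  have hs := ht.trans hts
  rcases lt_or_gt_of_ne hw with h | h
  · have := hmono.1 (show s * w ∈ Set.Iio 0 from mul_neg_of_pos_of_neg hs h)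
      (show t * w ∈ Set.Iio 0 from mul_neg_of_pos_of_neg ht h) (mul_lt_mul_of_neg_right hts h)
    simp only [abs_mul, abs_of_pos hs, abs_of_pos ht, abs_of_neg h] at this
    rw [div_lt_div_iff₀ (by nlinarith) (by nlinarith)] at this
    nlinarith
  · have := hmono.2 (show t * w ∈ Set.Ioi 0 from mul_pos ht h)
      (show s * w ∈ Set.Ioi 0 from mul_pos hs h)
      (mul_lt_mul_of_pos_right hts h)
    simp only [abs_mul, abs_of_pos hs, abs_of_pos ht, abs_of_pos h] at this
    rw [div_lt_div_iff₀ (by positivity) (by positivity)] at this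
    nlinarith

/-- Proposition 3.7 (iii): `w ∈ S` is a critical point of `Ψ` iff `m(w)` is a nontrivial
critical point of `Φ`; moreover `inf_N Φ = inf_S Ψ`. -/
theorem stmt15
    {Vtx : Type*} (adj : Vtx → Vtx → Prop) (D : ℕ)
    (hsym : ∀ x y, adj x y → adj y x)
    (hirr : ∀ x, ¬ adj x x)
    (hfin : ∀ x, {y | adj x y}.Finite)
    (hdeg : ∀ x, {y | adj x y}.ncard ≤ D)
    (Vp : Vtx → ℝ) (C1 C2 : ℝ) (hC1 : 0 < C1)
    (hVbd : ∀ x, C1 ≤ Vp x ∧ Vp x ≤ C2)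
    (f : Vtx → ℝ → ℝ) (hcont : ∀ x, Continuous (f x))
    (a q : ℝ) (ha : 0 < a) (hq : 2 < q)
    (hgrowth : ∀ x t, |f x t| ≤ a * (|t| + |t| ^ (q - 1)))
    (hsmall : ∀ ε > 0, ∃ δ > 0, ∀ x t, t ≠ 0 → |t| < δ → |f x t| ≤ ε * |t|)
    (hmono : ∀ x, StrictMonoOn (fun t => f x t / |t|) (Set.Iio 0) ∧
             StrictMonoOn (fun t => f x t / |t|) (Set.Ioi 0))
    (F : Vtx → ℝ → ℝ) (hF : ∀ x t, F x t = ∫ s in (0:ℝ)..t, f x s)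
    (hsuper : ∀ M : ℝ, ∃ R > 0, ∀ x t, R ≤ |t| → M ≤ F x t / t ^ 2)
    (sw : H1 Vtx → ℝ)
    (hsw : ∀ w : H1 Vtx, w ≠ 0 → 0 < sw w ∧
      fderiv ℝ (PhiF adj Vp F) (sw w • w) (sw w • w) = 0 ∧
      ∀ s : ℝ, 0 < s → fderiv ℝ (PhiF adj Vp F) (s • w) (s • w) = 0 → s = sw w)
    :
    (∀ w : H1 Vtx, nrmH adj Vp w = 1 →
      ((∀ z : H1 Vtx, iprodH adj Vp w z = 0 →
          fderiv ℝ (fun v : H1 Vtx => PhiF adj Vp F (sw v • v)) w z = 0) ↔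
        (fderiv ℝ (PhiF adj Vp F) (sw w • w) = 0 ∧ sw w • w ≠ 0))) ∧
    sInf (PhiF adj Vp F '' Nehari adj Vp F) =
      sInf ((fun w : H1 Vtx => PhiF adj Vp F (sw w • w)) ''
        {w : H1 Vtx | nrmH adj Vp w = 1}) := by
  classical
  have h0 : ∀ x, f x 0 = 0 := by
    intro x
    have := hgrowth x 0
    rw [abs_zero, Real.zero_rpow (by linarith), add_zero, mul_zero] at this
    exact abs_nonpos_iff.1 this
  obtain ⟨B, hB, hBs, hBp⟩ := iprod_bilin adj D hsym hfin hdeg Vp C1 C2 hC1 hVbd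
  have hQ : ∀ u : H1 Vtx, ∑' x, (gradSq adj (fun y => u y) x + Vp x * (u x)^2) = B u u := by
    intro u
    rw [hB]
    unfold iprodH gradSq
    refine tsum_congr fun x => ?_
    ring
  have hBpos : ∀ u : H1 Vtx, u ≠ 0 → 0 < B u u := fun u hu =>
    lt_of_lt_of_le (mul_pos hC1 (pow_pos (norm_pos_iff.2 hu) 2)) (hBp u)
  have hnrm : ∀ u : H1 Vtx, nrmH adj Vp u = Real.sqrt (B u u) := by
    intro u
    unfold nrmH nrmV
    rw [hQ]
  set g : H1 Vtx → H1 Vtx := fun u => ⟨fun x => f x (u x), nem_mem f h0 hsmall u⟩ with hg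
  set P' : H1 Vtx → (H1 Vtx →L[ℝ] ℝ) := fun u => B u - innerSL ℝ (g u) with hP'
  have hP : ∀ u, HasStrictFDerivAt (PhiF adj Vp F) (P' u) u := by
    intro u
    have e : PhiF adj Vp F = fun u => (1/2) * B u u - ∑' x, F x (u x) := by
      funext u
      unfold PhiF
      rw [hQ]
    rw [e]
    have hBd : HasStrictFDerivAt (fun u => B u u) (B.precompR _ u (ContinuousLinearMap.id ℝ _) +
        B.precompL _ (ContinuousLinearMap.id ℝ _) u) u :=
      B.hasStrictFDerivAt_of_bilinear (hasStrictFDerivAt_id u) (hasStrictFDerivAt_id u)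
    have := (hBd.const_mul (1/2)).sub (J_strict f hcont h0 hsmall F hF u)
    refine this.congr_fderiv ?_
    ext z
    simp [hP', hg, hBs z u]
    ring
  have hfd : ∀ u, fderiv ℝ (PhiF adj Vp F) u = P' u := fun u => (hP u).hasFDerivAt.fderiv
  have hgs : ∀ u z : H1 Vtx, HasSum (fun x => f x (u x) * z x) (inner ℝ (g u) z) := by
    intro u z
    exact h1_hasSum_inner (g u) z
  have hk : ∀ w : H1 Vtx, w ≠ 0 → ∀ t s : ℝ, 0 < t → t < s →
      t * P' (s • w) w < s * P' (t • w) w := by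
    intro w hw t s ht hts
    obtain ⟨x0, hx0⟩ : ∃ x, w x ≠ 0 := by
      by_contra! h
      exact hw (lp.ext (funext h))
    have h1 := (hgs (t • w) w).mul_left s
    have h2 := (hgs (s • w) w).mul_left t
    have hlt : s * inner ℝ (g (t • w)) w < t * inner ℝ (g (s • w)) w := by
      refine hasSum_lt (fun x => ?_) (i := x0) ?_ h1 h2
      · by_cases hx : w x = 0
        · simp [hx]
        · exact (term_lt (f x) (hmono x) (w x) t s ht hts hx).le
      · exact term_lt (f x0) (hmono x0) (w x0) t s ht hts hx0
    simp only [hP', sub_apply, map_smul, smul_apply,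
      innerSL_apply_apply, smul_eq_mul]
    nlinarith
  have hpos : ∀ w, w ≠ 0 → 0 < sw w := fun w hw => (hsw w hw).1
  have hcrit : ∀ w, w ≠ 0 → P' (sw w • w) w = 0 := by
    intro w hw
    have := (hsw w hw).2.1
    rw [hfd, map_smul, smul_eq_mul] at this
    exact (mul_eq_zero.1 this).resolve_left (hpos w hw).ne'
  have hder : ∀ (w : H1 Vtx) (t : ℝ),
      HasDerivAt (fun t : ℝ => PhiF adj Vp F (t • w)) (P' (t • w) w) t := by
    intro w t
    have h1 : HasDerivAt (fun t : ℝ => t • w) w t := by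
      simpa using (hasDerivAt_id t).smul_const w
    exact (hP (t • w)).hasFDerivAt.comp_hasDerivAt t h1
  have hup : ∀ w, w ≠ 0 →
      StrictMonoOn (fun t : ℝ => PhiF adj Vp F (t • w)) (Set.Ioc 0 (sw w)) := by
    intro w hw
    refine strictMonoOn_of_deriv_pos (convex_Ioc _ _)
      (fun t _ => (hder w t).continuousAt.continuousWithinAt) ?_
    intro t ht
    rw [interior_Ioc] at ht
    rw [(hder w t).deriv]
    have := hk w hw t (sw w) ht.1 ht.2
    rw [hcrit w hw, mul_zero] at this
    exact pos_of_mul_pos_right this (hpos w hw).le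
  have hdn : ∀ w, w ≠ 0 →
      StrictAntiOn (fun t : ℝ => PhiF adj Vp F (t • w)) (Set.Ici (sw w)) := by
    intro w hw
    refine strictAntiOn_of_deriv_neg (convex_Ici _)
      (fun t _ => (hder w t).continuousAt.continuousWithinAt) ?_
    intro t ht
    rw [interior_Ici] at ht
    rw [(hder w t).deriv]
    have := hk w hw (sw w) t (hpos w hw) ht
    rw [hcrit w hw, mul_zero] at this
    exact neg_of_mul_neg_right this (hpos w hw).le
  have hne : ∀ w, nrmH adj Vp w = 1 → w ≠ 0 := by
    rintro w hw rfl
    rw [hnrm] at hw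
    simp at hw
  refine ⟨fun w hw => ?_, ?_⟩
  · have hw0 := hne w hw
    have hww : B w w = 1 := by
      rw [hnrm] at hw
      exact Real.sqrt_eq_one.1 hw
    rw [(psi_abs _ P' hP sw hpos hup hdn w hw0).fderiv, hfd]
    constructor
    · intro h
      refine ⟨?_, smul_ne_zero (hpos w hw0).ne' hw0⟩
      ext z
      have h1 := h (z - B w z • w) (by
        rw [← hB, map_sub, map_smul, hww]
        simp)
      rw [smul_apply, smul_eq_mul] at h1
      have h2 := (mul_eq_zero.1 h1).resolve_left (hpos w hw0).ne'
      rw [map_sub, map_smul, hcrit w hw0, smul_zero, sub_zero] at h2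
      simpa using h2
    · rintro ⟨h, -⟩ z -
      rw [h]
      simp
  · congr 1
    ext c
    constructor
    · rintro ⟨u, ⟨hu0, hu⟩, rfl⟩
      have hp := Real.sqrt_pos.2 (hBpos u hu0)
      set n := Real.sqrt (B u u) with hn
      have hw0 : n⁻¹ • u ≠ 0 := smul_ne_zero (inv_ne_zero hp.ne') hu0
      have e : n • n⁻¹ • u = u := smul_inv_smul₀ hp.ne' u
      have hs : n = sw (n⁻¹ • u) := (hsw _ hw0).2.2 n hp (by rw [e]; exact hu)
      refine ⟨n⁻¹ • u, ?_, ?_⟩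
      · change nrmH adj Vp _ = 1
        rw [hnrm]
        have : B u u = n ^ 2 := (Real.sq_sqrt (hBpos u hu0).le).symm
        simp only [map_smul, smul_apply, smul_eq_mul]
        rw [this]
        have : n⁻¹ * (n⁻¹ * n ^ 2) = 1 := by field_simp
        rw [this, Real.sqrt_one]
      · change PhiF adj Vp F (sw (n⁻¹ • u) • n⁻¹ • u) = _
        rw [← hs, e]
    · rintro ⟨w, hw, rfl⟩
      have hw0 := hne w hw
      exact ⟨sw w • w, ⟨smul_ne_zero (hpos w hw0).ne' hw0, (hsw w hw0).2.1⟩, rfl⟩
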